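/- arXiv:2012.09450 — 3 statements merged into one kernel-verified Lean document; each statement's English description precedes it below -/
import Mathlib

section
/- Suppose (X,d_X,μ_X) and (Y,d_Y,μ_Y) are metric measure spaces with doubling Borel measures, each of which is a Lipschitz differentiability space with systems of Lipschitz charts {(U_i, φ_i)}_{i∈ℕ} (with φ_i : X → ℝ^{m_i}) and {(V_j, ψ_j)}_{j∈ℕ} (with ψ_j : Y → ℝ^{n_j}) respectively. Then the product X × Y, equipped with the metric max{d_X, d_Y} and the product measure μ_X × μ_Y, is a metric measure space with doubling measure and is a Lipschitz differentiability space with the system of charts {(U_i × V_j, φ_i × ψ_j)}_{i,j∈ℕ}, where (φ_i × ψ_j)(x,y) = (φ_i(x), ψ_j(y)). Moreover, for every Lipschitz f : X × Y → ℝ and every i, j, for μ_X × μ_Y-a.e. (x₀,y₀) ∈ U_i × V_j, the (unique) derivative of f at (x₀,y₀) with respect to φ_i × ψ_j equals (D_X f(x₀,y₀), D_Y f(x₀,y₀)), where D_X f(x₀,y₀) and D_Y f(x₀,y₀) are the X- and Y-directional derivatives of f with respect to φ_i and ψ_j. -/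
open MeasureTheory Metric Filter Set
open scoped ENNReal NNReal

noncomputable section

/-- Dot product of two vectors in `ℝ^d`. -/
def dotp {d : ℕ} (v u : Fin d → ℝ) : ℝ := ∑ k, v k * u k

/-- `v` satisfies the first-order Taylor approximation property of `f` at `x` with respect
to the Lipschitz chart map `φ`:
`lim_{y→x} (f y − f x − v·(φ y − φ x)) / d(x,y) = 0`. -/
def HasChartDerivAt {X : Type*} [MetricSpace X] {d : ℕ}
    (φ : X → Fin d → ℝ) (f : X → ℝ) (x : X) (v : Fin d → ℝ) : Prop :=
  Filter.Tendsto (fun y => (f y - f x - dotp v (fun k => φ y k - φ x k)) / dist y x)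
    (nhdsWithin x {x}ᶜ) (nhds 0)

/-- A Borel measure is doubling: every ball has positive finite measure and doubling the
radius increases the measure by at most a fixed finite factor. -/
def IsDoublingMeasure {M : Type*} [PseudoMetricSpace M] [MeasurableSpace M]
    (μ : Measure M) : Prop :=
  ∃ CD : ℝ≥0∞, CD < ⊤ ∧ ∀ (x : M) (r : ℝ), 0 < r →
    0 < μ (Metric.ball x r) ∧ μ (Metric.ball x r) < ⊤ ∧
      μ (Metric.ball x (2 * r)) ≤ CD * μ (Metric.ball x r)

/-!
Split the increment of `f` from `(x₀, y₀)` to `(x, y)` as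
`(f (x, y₀) - f (x₀, y₀)) + (f (x, y) - f (x, y₀))`. The first summand is controlled by the
`X`-derivative at `(x₀, y₀)`; the difficulty is that the second lives on the slice through `x`
instead of `x₀`. The set of points where a fixed vector `p` approximates the `Y`-derivative with
error `ε` up to a fixed scale `δ` is closed, and countably many such sets suffice. By Lebesgue
density in the doubling product, almost every point of such a set `S` is a point of nonporosity, so
there is a point of `S` within `o(r)` of `(x, y₀)`, where `r` is the distance from `(x, y)` to
`(x₀, y₀)`. As `f` is Lipschitz, moving to that point changes the second summand by only `o(r)`,
and there the approximation by `p` holds at the scale `δ`, which does not depend on `r`.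
-/

open Asymptotics TopologicalSpace
open scoped Topology

theorem secondCountableTopology_of_isOpenPosMeasure {M : Type*} [PseudoMetricSpace M]
    [MeasurableSpace M] [OpensMeasurableSpace M] (μ : Measure M) [SFinite μ] [μ.IsOpenPosMeasure] :
    SecondCountableTopology M := by
  refine Metric.secondCountable_of_almost_dense_set fun ε hε => ?_
  obtain ⟨s, -, hdisj, hcover⟩ :=
    Vitali.exists_disjoint_subfamily_covering_enlargement_closedBall
      (univ : Set M) id (fun _ => ε / 5) (ε / 5) (fun _ _ => le_rfl) 5 (by norm_num)
  refine ⟨s, ?_, fun x => ?_⟩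
  · have hcount := Measure.countable_meas_pos_of_disjoint_iUnion (μ := μ)
      (As := fun a : s => closedBall (a : M) (ε / 5)) (fun _ => measurableSet_closedBall)
      (fun a b hab => hdisj a.2 b.2 (Subtype.coe_ne_coe.2 hab))
    have hpos (a : s) : 0 < μ (closedBall (a : M) (ε / 5)) :=
      measure_closedBall_pos μ _ (by positivity)
    simpa only [hpos, ofPred_true, countable_univ_iff, countable_coe_iff] using hcount
  · obtain ⟨b, hb, hxb⟩ := hcover x (mem_univ x)
    refine ⟨b, hb, ?_⟩
    simpa [mul_div_cancel₀] using hxb (mem_closedBall_self (by positivity))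

namespace IsDoublingMeasure

variable {M : Type*} [PseudoMetricSpace M] [MeasurableSpace M] {μ : Measure M}

theorem isOpenPosMeasure (h : IsDoublingMeasure μ) : μ.IsOpenPosMeasure := by
  obtain ⟨_, -, h⟩ := h
  refine ⟨fun s hs ⟨x, hx⟩ => ?_⟩
  obtain ⟨r, hr, hrs⟩ := Metric.isOpen_iff.1 hs x hx
  exact ((h x r hr).1.trans_le (measure_mono hrs)).ne'

theorem isLocallyFiniteMeasure (h : IsDoublingMeasure μ) : IsLocallyFiniteMeasure μ := by
  obtain ⟨_, -, h⟩ := h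
  exact ⟨fun x => ⟨ball x 1, ball_mem_nhds x one_pos, (h x 1 one_pos).2.1⟩⟩

theorem sigmaFinite (h : IsDoublingMeasure μ) : SigmaFinite μ := by
  obtain ⟨_, -, h⟩ := h
  rcases isEmpty_or_nonempty M with hM | ⟨⟨x⟩⟩
  · rw [Measure.eq_zero_of_isEmpty μ]
    infer_instance
  · refine ⟨⟨fun n : ℕ => ball x (n + 1), fun _ => trivial, fun n => (h x _ n.cast_add_one_pos).2.1,
      eq_univ_of_forall fun y => mem_iUnion.2 ?_⟩⟩
    obtain ⟨n, hn⟩ := exists_nat_gt (dist y x)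
    exact ⟨n, hn.trans (lt_add_one _)⟩

theorem secondCountableTopology [OpensMeasurableSpace M] (h : IsDoublingMeasure μ) :
    SecondCountableTopology M :=
  have := h.sigmaFinite
  have := h.isOpenPosMeasure
  secondCountableTopology_of_isOpenPosMeasure μ

theorem isUnifLocDoublingMeasure (h : IsDoublingMeasure μ) : IsUnifLocDoublingMeasure μ := by
  obtain ⟨C, hC, h⟩ := h
  refine ⟨⟨(C * C).toNNReal, ?_⟩⟩
  filter_upwards [self_mem_nhdsWithin] with r (hr : 0 < r) x
  rw [ENNReal.coe_toNNReal (ENNReal.mul_ne_top hC.ne hC.ne)]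
  calc μ (closedBall x (2 * r))
      ≤ μ (ball x (2 * (2 * r))) := measure_mono (closedBall_subset_ball (by linarith))
    _ ≤ C * μ (ball x (2 * r)) := (h x _ (by positivity)).2.2
    _ ≤ C * (C * μ (ball x r)) := by gcongr; exact (h x r hr).2.2
    _ ≤ C * C * μ (closedBall x r) := by rw [mul_assoc]; gcongr; exact ball_subset_closedBall

theorem prod {N : Type*} [PseudoMetricSpace N] [MeasurableSpace N] {ν : Measure N}
    (hμ : IsDoublingMeasure μ) (hν : IsDoublingMeasure ν) : IsDoublingMeasure (μ.prod ν) := by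
  have := hμ.sigmaFinite
  have := hν.sigmaFinite
  obtain ⟨C, hC, hμ⟩ := hμ
  obtain ⟨D, hD, hν⟩ := hν
  refine ⟨C * D, ENNReal.mul_lt_top hC hD, fun ⟨x, y⟩ r hr => ?_⟩
  obtain ⟨hx_pos, hx_top, hx⟩ := hμ x r hr
  obtain ⟨hy_pos, hy_top, hy⟩ := hν y r hr
  simp only [← ball_prod_same, Measure.prod_prod]
  refine ⟨ENNReal.mul_pos hx_pos.ne' hy_pos.ne', ENNReal.mul_lt_top hx_top hy_top, ?_⟩
  calc μ (ball x (2 * r)) * ν (ball y (2 * r))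
      ≤ (C * μ (ball x r)) * (D * ν (ball y r)) := by gcongr
    _ = C * D * (μ (ball x r) * ν (ball y r)) := by ring

end IsDoublingMeasure

theorem measure_prod_compl_iUnion_prod_eq_zero {X Y ι κ : Type*} [MeasurableSpace X]
    [MeasurableSpace Y] {μ : Measure X} {ν : Measure Y} [SFinite ν] {U : ι → Set X} {V : κ → Set Y}
    (hU : μ (⋃ i, U i)ᶜ = 0) (hV : ν (⋃ j, V j)ᶜ = 0) :
    μ.prod ν (⋃ i, ⋃ j, U i ×ˢ V j)ᶜ = 0 := by
  simp_rw [← prod_iUnion, ← iUnion_prod_const, compl_prod_eq_union]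
  refine measure_union_null ?_ ?_
  · rw [Measure.prod_prod, hU, zero_mul]
  · rw [Measure.prod_prod, hV, mul_zero]

/-- A set `S` is nonporous at `z` if every point `w` near `z` lies within `o(d(w, z))` of `S`. -/
def NonporousAt {M : Type*} [PseudoMetricSpace M] (S : Set M) (z : M) : Prop :=
  ∀ η > 0, ∀ᶠ w in 𝓝 z, ∃ s ∈ S, dist s w ≤ η * dist w z

theorem NonporousAt.mono {M : Type*} [PseudoMetricSpace M] {S T : Set M} {z : M}
    (h : NonporousAt S z) (hST : S ⊆ T) : NonporousAt T z := fun η hη =>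
  (h η hη).mono fun _ ⟨s, hs, hsw⟩ => ⟨s, hST hs, hsw⟩

/-- Lebesgue density also holds along off-centre balls of bounded eccentricity, such as the ball of
radius `η * dist w z` around `w`; near a density point of `S` these balls therefore meet `S`. -/
theorem ae_nonporousAt {M : Type*} [PseudoMetricSpace M] [MeasurableSpace M] [BorelSpace M]
    [SecondCountableTopology M] (μ : Measure M) [IsUnifLocDoublingMeasure μ]
    [IsLocallyFiniteMeasure μ] (S : Set M) : ∀ᵐ z ∂μ, z ∈ S → NonporousAt S z := by
  have hdensity (n : ℕ) := ae_imp_of_ae_restrict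
    (IsUnifLocDoublingMeasure.ae_tendsto_measure_inter_div μ S (n : ℝ))
  filter_upwards [ae_all_iff.2 hdensity] with z hz hzS η hη
  obtain ⟨n, hn⟩ := exists_nat_gt η⁻¹
  have hnη : 1 ≤ n * η := (inv_le_iff_one_le_mul₀ hη).1 hn.le
  have hradius : Tendsto (fun w => η * dist w z) (𝓝[{w | 0 < dist w z}] z) (𝓝[>] 0) := by
    refine tendsto_nhdsWithin_iff.2 ⟨tendsto_nhdsWithin_of_tendsto_nhds ?_, ?_⟩
    · exact Continuous.tendsto' (by fun_prop) _ _ (by simp)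
    · filter_upwards [self_mem_nhdsWithin] with w hw using mul_pos hη hw
  have hmem (w : M) : z ∈ closedBall w (n * (η * dist w z)) := by
    rw [mem_closedBall', ← mul_assoc]
    exact le_mul_of_one_le_left dist_nonneg hnη
  have hmeet := (hz n hzS id _ hradius (Eventually.of_forall hmem)).eventually
    (lt_mem_nhds one_pos)
  filter_upwards [eventually_nhdsWithin_iff.1 hmeet] with w hw
  obtain hwz | hwz := (dist_nonneg (x := w) (y := z)).eq_or_lt
  · exact ⟨z, hzS, by rw [dist_comm, ← hwz, mul_zero]⟩
  · obtain ⟨s, hs, hsw⟩ := nonempty_of_measure_ne_zero (ENNReal.div_pos_iff.1 (hw hwz)).1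
    exact ⟨s, hs, hsw⟩

theorem abs_dotProduct_le {ι : Type*} [Fintype ι] (v u : ι → ℝ) :
    |v ⬝ᵥ u| ≤ Fintype.card ι * ‖v‖ * ‖u‖ :=
  calc |v ⬝ᵥ u| ≤ ∑ k, |v k * u k| := Finset.abs_sum_le_sum_abs _ _
    _ ≤ ∑ _k : ι, ‖v‖ * ‖u‖ := by
      gcongr with k
      rw [abs_mul]
      exact mul_le_mul (norm_le_pi_norm v k) (norm_le_pi_norm u k) (abs_nonneg _) (norm_nonneg _)
    _ = Fintype.card ι * ‖v‖ * ‖u‖ := by simp [mul_assoc]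

section ChartApproximation

variable {X : Type*} [PseudoMetricSpace X] {d : ℕ} {φ : X → Fin d → ℝ} {f : X → ℝ} {x : X}
  {v p : Fin d → ℝ} {ε ε' δ δ' : ℝ} {L : ℝ≥0}

/-- The vector `v` approximates the derivative of `f` at `x` with respect to `φ` with relative
error `ε` on the ball of radius `δ`. Unlike the existence of a limit, this is a closed condition
on the data. -/
def IsChartApprox (φ : X → Fin d → ℝ) (f : X → ℝ) (v : Fin d → ℝ) (ε δ : ℝ) (x : X) : Prop :=
  ∀ y, dist y x < δ → |f y - f x - v ⬝ᵥ (φ y - φ x)| ≤ ε * dist y x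

theorem abs_dotProduct_sub_le (hφ : LipschitzWith L φ) (v : Fin d → ℝ) (x y : X) :
    |v ⬝ᵥ (φ y - φ x)| ≤ d * L * ‖v‖ * dist y x :=
  calc |v ⬝ᵥ (φ y - φ x)|
      ≤ d * ‖v‖ * ‖φ y - φ x‖ := by simpa using abs_dotProduct_le v (φ y - φ x)
    _ ≤ d * ‖v‖ * (L * dist y x) := by
        gcongr
        rw [← dist_eq_norm]
        exact hφ.dist_le_mul y x
    _ = d * L * ‖v‖ * dist y x := by ring

namespace IsChartApprox

theorem mono (h : IsChartApprox φ f v ε δ x) (hε : ε ≤ ε') (hδ : δ' ≤ δ) :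
    IsChartApprox φ f v ε' δ' x :=
  fun y hy => (h y (hy.trans_le hδ)).trans (by gcongr)

theorem of_norm_sub (h : IsChartApprox φ f v ε δ x) (hφ : LipschitzWith L φ) (p : Fin d → ℝ) :
    IsChartApprox φ f p (ε + d * L * ‖v - p‖) δ x := fun y hy =>
  calc |f y - f x - p ⬝ᵥ (φ y - φ x)|
      = |(f y - f x - v ⬝ᵥ (φ y - φ x)) + (v - p) ⬝ᵥ (φ y - φ x)| := by
        rw [sub_dotProduct]; ring_nf
    _ ≤ ε * dist y x + d * L * ‖v - p‖ * dist y x :=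
        (abs_add_le _ _).trans (add_le_add (h y hy) (abs_dotProduct_sub_le hφ _ x y))
    _ = (ε + d * L * ‖v - p‖) * dist y x := by ring

theorem abs_slice_sub_le {W : Type*} [PseudoMetricSpace W] {F : W × X → ℝ} {K : ℝ≥0}
    {z : W × X} (h : IsChartApprox φ (fun x => F (z.1, x)) v ε δ z.2)
    (hφ : LipschitzWith L φ) (hF : LipschitzWith K F) (w : W) (x : X) {y : X}
    (hy : dist y z.2 < δ) :
    |F (w, y) - F (w, x) - v ⬝ᵥ (φ y - φ x)|
      ≤ ε * dist y z.2 + (2 * K + d * L * ‖v‖) * dist z (w, x) := by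
  have hfst : dist w z.1 ≤ dist z (w, x) := by rw [dist_comm]; exact le_max_left _ _
  have hsnd : dist z.2 x ≤ dist z (w, x) := le_max_right _ _
  have hy_slice : |F (w, y) - F (z.1, y)| ≤ K * dist z (w, x) := by
    refine (hF.dist_le_mul (w, y) (z.1, y)).trans ?_
    rw [Prod.dist_eq, dist_self, max_eq_left dist_nonneg]
    gcongr
  have hbase : |F z - F (w, x)| ≤ K * dist z (w, x) := hF.dist_le_mul z (w, x)
  have hchart : |v ⬝ᵥ (φ z.2 - φ x)| ≤ d * L * ‖v‖ * dist z (w, x) :=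
    (abs_dotProduct_sub_le hφ v x z.2).trans (by gcongr)
  calc |F (w, y) - F (w, x) - v ⬝ᵥ (φ y - φ x)|
      = |(F (z.1, y) - F z - v ⬝ᵥ (φ y - φ z.2)) + (F (w, y) - F (z.1, y)) + (F z - F (w, x))
          - v ⬝ᵥ (φ z.2 - φ x)| := by simp only [dotProduct_sub]; ring_nf
    _ ≤ |F (z.1, y) - F z - v ⬝ᵥ (φ y - φ z.2)| + |F (w, y) - F (z.1, y)| + |F z - F (w, x)|
          + |v ⬝ᵥ (φ z.2 - φ x)| :=
        (abs_sub _ _).trans (add_le_add_left (abs_add_three _ _ _) _)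
    _ ≤ ε * dist y z.2 + K * dist z (w, x) + K * dist z (w, x)
          + d * L * ‖v‖ * dist z (w, x) := by gcongr; exact h y hy
    _ = ε * dist y z.2 + (2 * K + d * L * ‖v‖) * dist z (w, x) := by ring

end IsChartApprox

theorem isClosed_setOf_isChartApprox {W : Type*} [TopologicalSpace W] {F : W × X → ℝ}
    (hφ : Continuous φ) (hF : Continuous F) (v : Fin d → ℝ) (ε δ : ℝ) :
    IsClosed {z : W × X | IsChartApprox φ (fun x => F (z.1, x)) v ε δ z.2} := by
  simp only [IsChartApprox, imp_iff_not_or, not_lt, ofPred_forall, ofPred_or]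
  refine isClosed_iInter fun y => (isClosed_le ?_ ?_).union (isClosed_le ?_ ?_)
  · fun_prop
  · fun_prop
  · have : Continuous fun z : W × X => v ⬝ᵥ (φ y - φ z.2) := by fun_prop
    fun_prop
  · fun_prop

/-- Nonporosity supplies, for each point `z'` near `z`, a good point at distance `o(d(z', z))` from
`(z'.1, z.2)`, from which the approximation transfers to the slice through `z'`. -/
theorem isLittleO_slice_sub_of_nonporousAt {W : Type*} [PseudoMetricSpace W] {F : W × X → ℝ}
    {K : ℝ≥0} {z : W × X} (hφ : LipschitzWith L φ) (hF : LipschitzWith K F)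
    (h : ∀ ε > 0, ∃ p δ, 0 < δ ∧ ‖p - v‖ ≤ ε ∧
      NonporousAt {z' : W × X | IsChartApprox φ (fun x => F (z'.1, x)) p ε δ z'.2} z) :
    (fun z' : W × X => F z' - F (z'.1, z.2) - v ⬝ᵥ (φ z'.2 - φ z.2)) =o[𝓝 z]
      fun z' => dist z' z := by
  refine isLittleO_iff.2 fun c hc => ?_
  obtain ⟨ε, hε, hεc⟩ := exists_pos_mul_lt (half_pos hc) (1 + d * L)
  obtain ⟨p, δ, hδ, hpv, hporous⟩ := h ε hε
  obtain ⟨η, hη, hηc⟩ := exists_pos_mul_lt (half_pos hc) (ε + (2 * K + d * L * ‖p‖))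
  have hproj : Tendsto (fun z' : W × X => (z'.1, z.2)) (𝓝 z) (𝓝 z) :=
    Continuous.tendsto' (by fun_prop) _ _ rfl
  have hsmall : ∀ᶠ z' in 𝓝 z, (1 + η) * dist z' z < δ :=
    (Continuous.tendsto' (by fun_prop) _ 0 (by simp)).eventually (gt_mem_nhds hδ)
  filter_upwards [hproj.eventually (hporous η hη), hsmall] with z' ⟨s, hs, hsz'⟩ hz'
  have hsnd : dist z'.2 z.2 ≤ dist z' z := le_max_right _ _
  have hs_near : dist s (z'.1, z.2) ≤ η * dist z' z := by
    refine hsz'.trans ?_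
    gcongr
    rw [Prod.dist_eq, dist_self]
    exact max_le (le_max_left _ _) dist_nonneg
  have hs_dist : dist z'.2 s.2 ≤ (1 + η) * dist z' z := by
    have : dist s.2 z.2 ≤ dist s (z'.1, z.2) := le_max_right _ _
    linarith [dist_triangle_right z'.2 s.2 z.2]
  have happrox := hs.abs_slice_sub_le hφ hF z'.1 z.2 (hs_dist.trans_lt hz')
  rw [Real.norm_eq_abs, Real.norm_of_nonneg dist_nonneg]
  calc |F z' - F (z'.1, z.2) - v ⬝ᵥ (φ z'.2 - φ z.2)|
      = |(F z' - F (z'.1, z.2) - p ⬝ᵥ (φ z'.2 - φ z.2)) + (p - v) ⬝ᵥ (φ z'.2 - φ z.2)| := by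
        rw [sub_dotProduct]; ring_nf
    _ ≤ (ε * dist z'.2 s.2 + (2 * K + d * L * ‖p‖) * dist s (z'.1, z.2))
          + d * L * ‖p - v‖ * dist z'.2 z.2 :=
        (abs_add_le _ _).trans (add_le_add happrox (abs_dotProduct_sub_le hφ _ _ _))
    _ ≤ (ε * ((1 + η) * dist z' z) + (2 * K + d * L * ‖p‖) * (η * dist z' z))
          + d * L * ε * dist z' z := by gcongr
    _ = ((1 + d * L) * ε + (ε + (2 * K + d * L * ‖p‖)) * η) * dist z' z := by ring
    _ ≤ c * dist z' z := by gcongr; linarith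

end ChartApproximation

section ChartDerivative

variable {X : Type*} [MetricSpace X] {d : ℕ} {φ : X → Fin d → ℝ} {f g : X → ℝ} {x : X}
  {v w : Fin d → ℝ} {ε : ℝ} {L : ℝ≥0}

theorem hasChartDerivAt_iff_isLittleO :
    HasChartDerivAt φ f x v ↔
      (fun y => f y - f x - v ⬝ᵥ (φ y - φ x)) =o[𝓝 x] fun y => dist y x := by
  have hne : ∀ᶠ y in 𝓝[≠] x, dist y x = 0 → f y - f x - v ⬝ᵥ (φ y - φ x) = 0 := by
    filter_upwards [self_mem_nhdsWithin] with y hy h using absurd (dist_eq_zero.1 h) hy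
  rw [← nhdsWithin_univ, ← union_compl_self {x}, ← insert_eq,
    isLittleO_insert (by simp), isLittleO_iff_tendsto' hne]
  rfl

theorem hasChartDerivAt_iff_isChartApprox :
    HasChartDerivAt φ f x v ↔ ∀ ε > 0, ∃ δ > 0, IsChartApprox φ f v ε δ x := by
  simp only [hasChartDerivAt_iff_isLittleO, isLittleO_iff, Metric.eventually_nhds_iff,
    Real.norm_eq_abs, abs_of_nonneg dist_nonneg]
  rfl

theorem HasChartDerivAt.eq_of_existsUnique (hg : ∃! u, HasChartDerivAt φ g x u)
    (hv : HasChartDerivAt φ f x v) (hw : HasChartDerivAt φ f x w) : v = w := by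
  obtain ⟨u, hu, huniq⟩ := hg
  have hshift : HasChartDerivAt φ g x (u + (v - w)) := by
    rw [hasChartDerivAt_iff_isLittleO] at hu hv hw ⊢
    refine (hu.add (hv.sub hw)).congr_left fun y => ?_
    rw [add_dotProduct, sub_dotProduct]
    ring
  exact sub_eq_zero.1 (add_eq_left.1 (huniq _ hshift))

theorem HasChartDerivAt.exists_denseSeq_isChartApprox (h : HasChartDerivAt φ f x v)
    (hφ : LipschitzWith L φ) (hε : 0 < ε) :
    ∃ q l : ℕ, ‖denseSeq (Fin d → ℝ) q - v‖ ≤ ε ∧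
      IsChartApprox φ f (denseSeq (Fin d → ℝ) q) ε (1 / (l + 1)) x := by
  obtain ⟨η, hη, hηε⟩ := exists_pos_mul_lt (half_pos hε) (d * L)
  obtain ⟨q, hq⟩ := (denseRange_denseSeq (Fin d → ℝ)).exists_dist_lt v (lt_min hη hε)
  rw [dist_eq_norm, lt_min_iff] at hq
  obtain ⟨δ, hδ, happrox⟩ := hasChartDerivAt_iff_isChartApprox.1 h (ε / 2) (half_pos hε)
  obtain ⟨l, hl⟩ := exists_nat_one_div_lt hδ
  refine ⟨q, l, norm_sub_rev v _ ▸ hq.2.le, (happrox.of_norm_sub hφ _).mono ?_ hl.le⟩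
  have : d * L * ‖v - denseSeq (Fin d → ℝ) q‖ ≤ d * L * η := by gcongr; exact hq.1.le
  linarith

theorem exists_hasChartDerivAt_of_norm_le (hφ : LipschitzWith L φ) {N : ℝ}
    (h : ∀ k : ℕ, ∃ p δ, 0 < δ ∧ ‖p‖ ≤ N ∧ IsChartApprox φ f p (1 / (k + 1)) δ x) :
    ∃ v, HasChartDerivAt φ f x v := by
  choose p δ hδ hpN happrox using h
  obtain ⟨v, -, s, hs, hlim⟩ := (isCompact_closedBall (0 : Fin d → ℝ) N).tendsto_subseq
    fun k => mem_closedBall_zero_iff.2 (hpN k)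
  have herror : Tendsto (fun n => 1 / ((s n : ℝ) + 1) + d * L * ‖p (s n) - v‖) atTop (𝓝 0) := by
    simpa using (tendsto_one_div_add_atTop_nhds_zero_nat.comp hs.tendsto_atTop).add
      ((tendsto_iff_norm_sub_tendsto_zero.1 hlim).const_mul (d * L : ℝ))
  refine ⟨v, hasChartDerivAt_iff_isChartApprox.2 fun ε hε => ?_⟩
  obtain ⟨n, hn⟩ := (herror.eventually (gt_mem_nhds hε)).exists
  exact ⟨δ (s n), hδ _, ((happrox (s n)).of_norm_sub hφ v).mono hn.le le_rfl⟩

theorem exists_hasChartDerivAt_iff (hφ : LipschitzWith L φ) :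
    (∃ v, HasChartDerivAt φ f x v) ↔ ∃ N : ℕ, ∀ k : ℕ, ∃ q l : ℕ,
      ‖denseSeq (Fin d → ℝ) q‖ ≤ N ∧
        IsChartApprox φ f (denseSeq (Fin d → ℝ) q) (1 / (k + 1)) (1 / (l + 1)) x := by
  constructor
  · rintro ⟨v, hv⟩
    obtain ⟨N, hN⟩ := exists_nat_ge (‖v‖ + 1)
    refine ⟨N, fun k => ?_⟩
    obtain ⟨q, l, hq, happrox⟩ := hv.exists_denseSeq_isChartApprox hφ (ε := 1 / ((k : ℝ) + 1))
      Nat.one_div_pos_of_nat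
    have hk : 1 / ((k : ℝ) + 1) ≤ 1 := by simpa using Nat.one_div_le_one_div (α := ℝ) k.zero_le
    exact ⟨q, l, by linarith [norm_le_norm_add_norm_sub' (denseSeq (Fin d → ℝ) q) v], happrox⟩
  · rintro ⟨N, h⟩
    refine exists_hasChartDerivAt_of_norm_le hφ (N := N) fun k => ?_
    obtain ⟨q, l, hq, happrox⟩ := h k
    exact ⟨_, _, Nat.one_div_pos_of_nat, hq, happrox⟩

section Slices

variable {W : Type*} {F : W × X → ℝ}

theorem measurableSet_exists_hasChartDerivAt_slice [TopologicalSpace W] [MeasurableSpace W]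
    [MeasurableSpace X] [OpensMeasurableSpace (W × X)] (hφ : LipschitzWith L φ)
    (hF : Continuous F) :
    MeasurableSet {z : W × X | ∃ v, HasChartDerivAt φ (fun x => F (z.1, x)) z.2 v} := by
  simp only [exists_hasChartDerivAt_iff hφ, ofPred_exists, ofPred_forall]
  exact .iUnion fun N => .iInter fun k => .iUnion fun q => .iUnion fun l =>
    (MeasurableSet.const _).inter
      (isClosed_setOf_isChartApprox hφ.continuous hF _ _ _).measurableSet

theorem ae_prod_exists_hasChartDerivAt_slice [TopologicalSpace W] [MeasurableSpace W]
    [MeasurableSpace X] [OpensMeasurableSpace (W × X)] {ν : Measure W} {μ : Measure X} [SFinite μ]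
    (hφ : LipschitzWith L φ) (hF : Continuous F)
    (h : ∀ᵐ w ∂ν, ∀ᵐ x ∂μ, ∃ v, HasChartDerivAt φ (fun x => F (w, x)) x v) :
    ∀ᵐ z ∂ν.prod μ, ∃ v, HasChartDerivAt φ (fun x => F (z.1, x)) z.2 v :=
  (Measure.ae_prod_mem_iff_ae_ae_mem (measurableSet_exists_hasChartDerivAt_slice hφ hF)).2 h

theorem ae_isLittleO_slice_sub [PseudoMetricSpace W] [MeasurableSpace (W × X)] [BorelSpace (W × X)]
    [SecondCountableTopology (W × X)] {ρ : Measure (W × X)} [IsUnifLocDoublingMeasure ρ]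
    [IsLocallyFiniteMeasure ρ] {K : ℝ≥0} (hφ : LipschitzWith L φ) (hF : LipschitzWith K F) :
    ∀ᵐ z ∂ρ, ∀ v, HasChartDerivAt φ (fun x => F (z.1, x)) z.2 v →
      (fun z' : W × X => F z' - F (z'.1, z.2) - v ⬝ᵥ (φ z'.2 - φ z.2)) =o[𝓝 z]
        fun z' => dist z' z := by
  have hporous (q k l : ℕ) := ae_nonporousAt ρ {z : W × X | IsChartApprox φ (fun x => F (z.1, x))
    (denseSeq (Fin d → ℝ) q) (1 / (k + 1)) (1 / (l + 1)) z.2}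
  filter_upwards [ae_all_iff.2 fun q => ae_all_iff.2 fun k => ae_all_iff.2 (hporous q k)]
    with z hz v hv
  refine isLittleO_slice_sub_of_nonporousAt hφ hF fun ε hε => ?_
  obtain ⟨k, hk⟩ := exists_nat_one_div_lt hε
  obtain ⟨q, l, hq, happrox⟩ := hv.exists_denseSeq_isChartApprox hφ (ε := 1 / ((k : ℝ) + 1))
    Nat.one_div_pos_of_nat
  exact ⟨_, _, Nat.one_div_pos_of_nat, hq.trans hk.le,
    (hz q k l happrox).mono fun _ h => h.mono hk.le le_rfl⟩

end Slices

end ChartDerivative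

section ProductChart

theorem append_dotProduct_append_sub_append {a b : ℕ} (u s s' : Fin a → ℝ) (v t t' : Fin b → ℝ) :
    Fin.append u v ⬝ᵥ (Fin.append s t - Fin.append s' t') = u ⬝ᵥ (s - s') + v ⬝ᵥ (t - t') := by
  simp [dotProduct, Fin.sum_univ_add]

theorem exists_lipschitzWith_append {X Y : Type*} [PseudoEMetricSpace X] [PseudoEMetricSpace Y]
    {a b : ℕ} {φ : X → Fin a → ℝ} {ψ : Y → Fin b → ℝ} {L M : ℝ≥0} (hφ : LipschitzWith L φ)
    (hψ : LipschitzWith M ψ) : ∃ K, LipschitzWith K fun z : X × Y => Fin.append (φ z.1) (ψ z.2) :=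
  ⟨_, (Fin.appendIsometry a b).isometry.lipschitz.comp
    ((hφ.comp .prod_fst).prodMk (hψ.comp .prod_snd))⟩

variable {X Y : Type*} [MetricSpace X] [MetricSpace Y] {a b : ℕ} {φ : X → Fin a → ℝ}
  {ψ : Y → Fin b → ℝ} {f : X × Y → ℝ} {z : X × Y} {u : Fin a → ℝ} {v : Fin b → ℝ}

theorem HasChartDerivAt.append (hu : HasChartDerivAt φ (fun x => f (x, z.2)) z.1 u)
    (hv : (fun z' : X × Y => f z' - f (z'.1, z.2) - v ⬝ᵥ (ψ z'.2 - ψ z.2)) =o[𝓝 z]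
      fun z' => dist z' z) :
    HasChartDerivAt (fun z' : X × Y => Fin.append (φ z'.1) (ψ z'.2)) f z (Fin.append u v) := by
  have hfst : (fun z' : X × Y => dist z'.1 z.1) =O[𝓝 z] fun z' => dist z' z :=
    isBigO_of_le _ fun z' => by
      rw [Real.norm_of_nonneg dist_nonneg, Real.norm_of_nonneg dist_nonneg]
      exact le_max_left _ _
  have hu' := ((hasChartDerivAt_iff_isLittleO.1 hu).comp_tendsto continuous_fst.continuousAt)
    |>.trans_isBigO hfst
  refine hasChartDerivAt_iff_isLittleO.2 ((hu'.add hv).congr_left fun z' => ?_)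
  simp only [Function.comp, append_dotProduct_append_sub_append]
  ring

theorem HasChartDerivAt.fst_of_append
    (h : HasChartDerivAt (fun z' : X × Y => Fin.append (φ z'.1) (ψ z'.2)) f z (Fin.append u v)) :
    HasChartDerivAt φ (fun x => f (x, z.2)) z.1 u := by
  have hslice : Tendsto (fun x => (x, z.2)) (𝓝 z.1) (𝓝 z) :=
    Continuous.tendsto' (by fun_prop) _ _ rfl
  simpa [hasChartDerivAt_iff_isLittleO, Function.comp_def, append_dotProduct_append_sub_append,
    Prod.dist_eq, -dotProduct_sub] using (hasChartDerivAt_iff_isLittleO.1 h).comp_tendsto hslice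

theorem HasChartDerivAt.snd_of_append
    (h : HasChartDerivAt (fun z' : X × Y => Fin.append (φ z'.1) (ψ z'.2)) f z (Fin.append u v)) :
    HasChartDerivAt ψ (fun y => f (z.1, y)) z.2 v := by
  have hslice : Tendsto (fun y => (z.1, y)) (𝓝 z.2) (𝓝 z) :=
    Continuous.tendsto' (by fun_prop) _ _ rfl
  simpa [hasChartDerivAt_iff_isLittleO, Function.comp_def, append_dotProduct_append_sub_append,
    Prod.dist_eq, -dotProduct_sub] using (hasChartDerivAt_iff_isLittleO.1 h).comp_tendsto hslice

theorem HasChartDerivAt.eq_append {w : Fin (a + b) → ℝ}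
    (h : HasChartDerivAt (fun z' : X × Y => Fin.append (φ z'.1) (ψ z'.2)) f z w)
    (hu : ∀ u', HasChartDerivAt φ (fun x => f (x, z.2)) z.1 u' → u' = u)
    (hv : ∀ v', HasChartDerivAt ψ (fun y => f (z.1, y)) z.2 v' → v' = v) :
    w = Fin.append u v := by
  rw [← Fin.append_castAdd_natAdd (f := w)] at h ⊢
  rw [hu _ h.fst_of_append, hv _ h.snd_of_append]

theorem ae_hasChartDerivAt_append [MeasurableSpace X] [BorelSpace X] [MeasurableSpace Y]
    [BorelSpace Y] {μ : Measure X} {ν : Measure Y} (hμ : IsDoublingMeasure μ)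
    (hν : IsDoublingMeasure ν) {U : Set X} {V : Set Y} {K L M : ℝ≥0}
    (hφ : LipschitzWith L φ) (hψ : LipschitzWith M ψ) (hf : LipschitzWith K f)
    (hX : ∀ᵐ y ∂ν.restrict V, ∀ᵐ x ∂μ.restrict U, ∃ u, HasChartDerivAt φ (fun x => f (x, y)) x u)
    (hY : ∀ᵐ x ∂μ.restrict U, ∀ᵐ y ∂ν.restrict V, ∃ v, HasChartDerivAt ψ (fun y => f (x, y)) y v) :
    ∀ᵐ z ∂(μ.prod ν).restrict (U ×ˢ V), ∃ u v,
      HasChartDerivAt φ (fun x => f (x, z.2)) z.1 u ∧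
      HasChartDerivAt ψ (fun y => f (z.1, y)) z.2 v ∧
      HasChartDerivAt (fun z' : X × Y => Fin.append (φ z'.1) (ψ z'.2)) f z (Fin.append u v) := by
  have := hμ.sigmaFinite
  have := hν.sigmaFinite
  have := hμ.secondCountableTopology
  have := hν.secondCountableTopology
  have := (hμ.prod hν).isUnifLocDoublingMeasure
  have := (hμ.prod hν).isLocallyFiniteMeasure
  have hψ_joint : ∀ᵐ z ∂(μ.prod ν).restrict (U ×ˢ V), _ :=
    ae_restrict_of_ae (ae_isLittleO_slice_sub hψ hf)
  rw [← Measure.prod_restrict] at hψ_joint ⊢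
  have hX_swap := ae_prod_exists_hasChartDerivAt_slice hφ (hf.continuous.comp continuous_swap) hX
  have hX_prod := Measure.measurePreserving_swap.quasiMeasurePreserving.ae hX_swap
  have hY_prod := ae_prod_exists_hasChartDerivAt_slice hψ hf.continuous hY
  filter_upwards [hψ_joint, hX_prod, hY_prod] with z hz ⟨u, hu⟩ ⟨v, hv⟩
  exact ⟨u, v, hu, hv, hu.append (hz v hv)⟩

end ProductChart

/-- Tensorization of Lipschitz differentiability spaces (Theorem 3.5 of the paper):
the product of two doubling Lipschitz differentiability spaces, with the sup metric and
the product measure, is a doubling Lipschitz differentiability space whose charts are the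
products of the charts, and the derivative of a Lipschitz function with respect to a
product chart is the pair of directional derivatives. -/
theorem statement5 {X Y : Type*}
    [MetricSpace X] [MeasurableSpace X] [BorelSpace X]
    [MetricSpace Y] [MeasurableSpace Y] [BorelSpace Y]
    (μX : Measure X) (μY : Measure Y)
    (hdX : IsDoublingMeasure μX) (hdY : IsDoublingMeasure μY)
    (m : ℕ → ℕ) (U : ℕ → Set X) (hU : ∀ i, MeasurableSet (U i))
    (φ : ∀ i, X → Fin (m i) → ℝ) (hφ : ∀ i, ∃ K : ℝ≥0, LipschitzWith K (φ i))
    (hcovX : μX ((⋃ i, U i)ᶜ) = 0)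
    (hLDSX : ∀ g : X → ℝ, (∃ K : ℝ≥0, LipschitzWith K g) → ∀ i,
      ∀ᵐ x ∂(μX.restrict (U i)), ∃! v, HasChartDerivAt (φ i) g x v)
    (n : ℕ → ℕ) (V : ℕ → Set Y) (hV : ∀ j, MeasurableSet (V j))
    (ψ : ∀ j, Y → Fin (n j) → ℝ) (hψ : ∀ j, ∃ K : ℝ≥0, LipschitzWith K (ψ j))
    (hcovY : μY ((⋃ j, V j)ᶜ) = 0)
    (hLDSY : ∀ g : Y → ℝ, (∃ K : ℝ≥0, LipschitzWith K g) → ∀ j,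
      ∀ᵐ y ∂(μY.restrict (V j)), ∃! w, HasChartDerivAt (ψ j) g y w) :
    IsDoublingMeasure (μX.prod μY) ∧
    (μX.prod μY) ((⋃ i, ⋃ j, (U i) ×ˢ (V j))ᶜ) = 0 ∧
    (∀ i j, MeasurableSet ((U i) ×ˢ (V j))) ∧
    (∀ i j, ∃ K : ℝ≥0,
      LipschitzWith K (fun z : X × Y => Fin.append (φ i z.1) (ψ j z.2))) ∧
    ∀ f : X × Y → ℝ, (∃ K : ℝ≥0, LipschitzWith K f) → ∀ i j,
      ∀ᵐ z ∂((μX.prod μY).restrict ((U i) ×ˢ (V j))),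
        ∃ (vX : Fin (m i) → ℝ) (vY : Fin (n j) → ℝ),
          HasChartDerivAt (φ i) (fun x => f (x, z.2)) z.1 vX ∧
          HasChartDerivAt (ψ j) (fun y => f (z.1, y)) z.2 vY ∧
          (∀ v', HasChartDerivAt (φ i) (fun x => f (x, z.2)) z.1 v' → v' = vX) ∧
          (∀ w', HasChartDerivAt (ψ j) (fun y => f (z.1, y)) z.2 w' → w' = vY) ∧
          HasChartDerivAt (fun z' : X × Y => Fin.append (φ i z'.1) (ψ j z'.2)) f z
            (Fin.append vX vY) ∧
          (∀ vw : Fin (m i + n j) → ℝ,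
            HasChartDerivAt (fun z' : X × Y => Fin.append (φ i z'.1) (ψ j z'.2)) f z vw →
              vw = Fin.append vX vY) := by
  have := hdX.sigmaFinite
  have := hdY.sigmaFinite
  choose L hL using hφ
  choose M hM using hψ
  refine ⟨hdX.prod hdY, measure_prod_compl_iUnion_prod_eq_zero hcovX hcovY,
    fun i j => (hU i).prod (hV j), fun i j => exists_lipschitzWith_append (hL i) (hM j),
    fun f ⟨K, hf⟩ i j => ?_⟩
  have hX (y : Y) := hLDSX (fun x => f (x, y)) ⟨_, hf.comp (.prodMk_right y)⟩ i
  have hY (x : X) := hLDSY (fun y => f (x, y)) ⟨_, hf.comp (.prodMk_left x)⟩ j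
  have hdiff := ae_hasChartDerivAt_append hdX hdY (hL i) (hM j) hf
    (.of_forall fun y => (hX y).mono fun _ h => h.exists)
    (.of_forall fun x => (hY x).mono fun _ h => h.exists)
  -- Uniqueness does not depend on the function, and for `0` it needs no Fubini argument.
  have hzeroX := (Measure.quasiMeasurePreserving_fst (ν := μY.restrict (V j))).ae
    (hLDSX 0 ⟨0, .const 0⟩ i)
  have hzeroY := (Measure.quasiMeasurePreserving_snd (μ := μX.restrict (U i))).ae
    (hLDSY 0 ⟨0, .const 0⟩ j)
  rw [← Measure.prod_restrict] at hdiff ⊢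
  filter_upwards [hdiff, hzeroX, hzeroY] with z ⟨u, v, hu, hv, huv⟩ hzX hzY
  have huniqX := fun u' h => HasChartDerivAt.eq_of_existsUnique (v := u') hzX h hu
  have huniqY := fun v' h => HasChartDerivAt.eq_of_existsUnique (v := v') hzY h hv
  exact ⟨u, v, hu, hv, huniqX, huniqY, huv, fun _ h => h.eq_append huniqX huniqY⟩
end
end

section
/- Let (X,d_X,μ_X) be a metric measure space with a Borel measure, let −1 < a < 1, let A ⊆ X be μ_X-measurable, and let h > 0. Call a measurable function ρ : X × (0,∞) → [0,∞] admissible if ∫₀^h ρ(x,t) dt ≥ 1 for every x ∈ A. Then: (i) every admissible ρ satisfies ∫_X ∫₀^h ρ(x,t)² t^a dt dμ_X(x) ≥ (1−a) μ_X(A) / h^{1−a}; and (ii) the function ρ₀ := h^{−1} 1_{A×(0,h)} is admissible and satisfies ∫_X ∫₀^h ρ₀(x,t)² t^a dt dμ_X(x) = μ_X(A) / ((1+a) h^{1−a}). Consequently, the 2-modulus (with respect to the weighted measure dμ_a = t^a dt dμ_X on X × (0,∞)) of the family of vertical segments {t ↦ (x,t) : 0 ≤ t ≤ h}, x ∈ A,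 is comparable to μ_X(A)/h^{1−a}. -/
open MeasureTheory Metric Filter Set
open scoped ENNReal NNReal

noncomputable section

/-!
Hölder's inequality on a single fibre, applied to `1 ≤ ∫ ρ x = ∫ (ρ x · w^(1/p)) · w^(-1/p)`,
bounds the weighted `p`-energy of an admissible `ρ x` from below by `(∫ w^(1-q))^(1-p)`, where
`1 - q` is the exponent of the dual weight; integrating over `A` gives the lower bound. Densities
independent of `x ∈ A` and zero off `A` have an energy that factors as `μ A` times a fibre
integral, which gives the upper bound. For `w = t ^ a` both fibre integrals are powers of `h`.
-/

section FiberModulus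

variable {X T : Type*} [MeasurableSpace T]

theorem rpow_lintegral_le_lintegral_mul_dual_weight {ν : Measure T} {p q : ℝ}
    (hpq : p.HolderConjugate q) {f w : T → ℝ≥0∞} (hf : AEMeasurable f ν) (hw : AEMeasurable w ν)
    (hw_zero : ∀ᵐ t ∂ν, w t ≠ 0) (hw_top : ∀ᵐ t ∂ν, w t ≠ ∞) :
    (∫⁻ t, f t ∂ν) ^ p ≤
      (∫⁻ t, f t ^ p * w t ∂ν) * (∫⁻ t, w t ^ (1 - q) ∂ν) ^ (p - 1) := by
  have split_weight : ∫⁻ t, f t ∂ν = ∫⁻ t, f t * w t ^ (1 / p) * w t ^ (-(1 / p)) ∂ν := by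
    refine lintegral_congr_ae ?_
    filter_upwards [hw_zero, hw_top] with t ht_zero ht_top
    rw [mul_assoc, ← ENNReal.rpow_add _ _ ht_zero ht_top, add_neg_cancel, ENNReal.rpow_zero,
      mul_one]
  have first_factor (t : T) : (f t * w t ^ (1 / p)) ^ p = f t ^ p * w t := by
    rw [ENNReal.mul_rpow_of_nonneg _ _ hpq.nonneg, ← ENNReal.rpow_mul,
      one_div_mul_cancel hpq.ne_zero, ENNReal.rpow_one]
  have second_factor (t : T) : (w t ^ (-(1 / p))) ^ q = w t ^ (1 - q) := by
    rw [← ENNReal.rpow_mul, ← neg_sub q, ← hpq.symm.div_conj_eq_sub_one]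
    ring_nf
  calc (∫⁻ t, f t ∂ν) ^ p
      ≤ ((∫⁻ t, f t ^ p * w t ∂ν) ^ (1 / p) * (∫⁻ t, w t ^ (1 - q) ∂ν) ^ (1 / q)) ^ p := by
        refine ENNReal.rpow_le_rpow ?_ hpq.nonneg
        simp only [split_weight, ← first_factor, ← second_factor]
        exact ENNReal.lintegral_mul_le_Lp_mul_Lq ν hpq
          (hf.mul (hw.pow_const _)) (hw.pow_const _)
    _ = (∫⁻ t, f t ^ p * w t ∂ν) * (∫⁻ t, w t ^ (1 - q) ∂ν) ^ (p - 1) := by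
        rw [ENNReal.mul_rpow_of_nonneg _ _ hpq.nonneg, ← ENNReal.rpow_mul, ← ENNReal.rpow_mul,
          one_div_mul_cancel hpq.ne_zero, ENNReal.rpow_one, one_div_mul_eq_div,
          hpq.div_conj_eq_sub_one]

/-- Admissibility of a density `ρ` on `X × T` for the family of fibres `{x} × T` with `x ∈ A`,
the line integral along a fibre being taken with respect to `ν`. -/
def IsFiberAdmissible (ν : Measure T) (A : Set X) (ρ : X → T → ℝ≥0∞) : Prop :=
  ∀ x ∈ A, 1 ≤ ∫⁻ t, ρ x t ∂ν

theorem isFiberAdmissible_indicator {ν : Measure T} {A : Set X} {g : T → ℝ≥0∞}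
    (hg : 1 ≤ ∫⁻ t, g t ∂ν) : IsFiberAdmissible ν A (A.indicator fun _ => g) := fun x hx => by
  rwa [indicator_of_mem hx]

variable [MeasurableSpace X]

/-- The `p`-energy of a density on `X × T` for the measure `w dν dμ`, as an iterated integral so
that `μ` need not be σ-finite. -/
def fiberEnergy (p : ℝ) (μ : Measure X) (ν : Measure T) (w : T → ℝ≥0∞)
    (ρ : X → T → ℝ≥0∞) : ℝ≥0∞ :=
  ∫⁻ x, ∫⁻ t, ρ x t ^ p * w t ∂ν ∂μ

/-- The `p`-modulus, for the measure `w dν dμ` on `X × T`, of the family of fibres over `A`. -/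
def fiberModulus (p : ℝ) (μ : Measure X) (ν : Measure T) (w : T → ℝ≥0∞) (A : Set X) : ℝ≥0∞ :=
  ⨅ (ρ : X → T → ℝ≥0∞) (_ : Measurable (Function.uncurry ρ)) (_ : IsFiberAdmissible ν A ρ),
    fiberEnergy p μ ν w ρ

variable {μ : Measure X} {ν : Measure T} {p q : ℝ} {w g : T → ℝ≥0∞} {A : Set X}
  {ρ : X → T → ℝ≥0∞}

theorem IsFiberAdmissible.div_le_fiberEnergy (hadm : IsFiberAdmissible ν A ρ)
    (hpq : p.HolderConjugate q) (hw : AEMeasurable w ν) (hw_zero : ∀ᵐ t ∂ν, w t ≠ 0)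
    (hw_top : ∀ᵐ t ∂ν, w t ≠ ∞) (hA : MeasurableSet A) (hρ : Measurable (Function.uncurry ρ)) :
    μ A / (∫⁻ t, w t ^ (1 - q) ∂ν) ^ (p - 1) ≤ fiberEnergy p μ ν w ρ := by
  have fiber_bound : ∀ x ∈ A,
      ((∫⁻ t, w t ^ (1 - q) ∂ν) ^ (p - 1))⁻¹ ≤ ∫⁻ t, ρ x t ^ p * w t ∂ν := fun x hx => by
    rw [← one_div]
    refine ENNReal.div_le_of_le_mul ((ENNReal.one_le_rpow (hadm x hx) hpq.pos).trans ?_)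
    exact rpow_lintegral_le_lintegral_mul_dual_weight hpq hρ.of_uncurry_left.aemeasurable hw
      hw_zero hw_top
  calc μ A / (∫⁻ t, w t ^ (1 - q) ∂ν) ^ (p - 1)
      = ∫⁻ _ in A, ((∫⁻ t, w t ^ (1 - q) ∂ν) ^ (p - 1))⁻¹ ∂μ := by
        rw [setLIntegral_const, mul_comm, div_eq_mul_inv]
    _ ≤ ∫⁻ x in A, ∫⁻ t, ρ x t ^ p * w t ∂ν ∂μ := setLIntegral_mono' hA fiber_bound
    _ ≤ fiberEnergy p μ ν w ρ := setLIntegral_le_lintegral _ _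

theorem fiberModulus_le_fiberEnergy (hρ : Measurable (Function.uncurry ρ))
    (hadm : IsFiberAdmissible ν A ρ) : fiberModulus p μ ν w A ≤ fiberEnergy p μ ν w ρ :=
  (iInf_le _ ρ).trans (iInf₂_le hρ hadm)

theorem fiberEnergy_indicator (hp : 0 < p) (hA : MeasurableSet A) :
    fiberEnergy p μ ν w (A.indicator fun _ => g) = μ A * ∫⁻ t, g t ^ p * w t ∂ν := by
  have fiber_energy (x : X) : ∫⁻ t, A.indicator (fun _ => g) x t ^ p * w t ∂ν =
      A.indicator (fun _ => ∫⁻ t, g t ^ p * w t ∂ν) x := by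
    by_cases hx : x ∈ A <;> simp [hx, hp]
  simp only [fiberEnergy, fiber_energy]
  rw [lintegral_indicator_const hA, mul_comm]

end FiberModulus

section PowerWeight

/-- The weight `t ^ a` of the measure `dμ_a = t ^ a dt dμ_X`. Its values at `t ≤ 0` are junk and
play no role, as it is only integrated over `(0, h]`. -/
def powerWeight (a t : ℝ) : ℝ≥0∞ := ENNReal.ofReal (t ^ a)

variable {p a h : ℝ}

theorem measurable_powerWeight : Measurable (powerWeight a) := by
  unfold powerWeight
  fun_prop

theorem powerWeight_ne_zero {t : ℝ} (ht : 0 < t) : powerWeight a t ≠ 0 :=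
  (ENNReal.ofReal_pos.2 (Real.rpow_pos_of_pos ht a)).ne'

theorem powerWeight_rpow {t : ℝ} (ht : 0 < t) (r : ℝ) :
    powerWeight a t ^ r = powerWeight (a * r) t := by
  rw [powerWeight, powerWeight, ENNReal.ofReal_rpow_of_pos (Real.rpow_pos_of_pos ht a),
    Real.rpow_mul ht.le]

theorem setLIntegral_powerWeight (ha : -1 < a) (hh : 0 ≤ h) :
    ∫⁻ t in Ioc 0 h, powerWeight a t = ENNReal.ofReal (h ^ (a + 1) / (a + 1)) := by
  have integrable : IntegrableOn (fun t : ℝ => t ^ a) (Ioc 0 h) := by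
    rw [← intervalIntegrable_iff_integrableOn_Ioc_of_le hh]
    exact intervalIntegral.intervalIntegrable_rpow' ha
  have nonneg : 0 ≤ᵐ[volume.restrict (Ioc 0 h)] fun t : ℝ => t ^ a := by
    filter_upwards [ae_restrict_mem measurableSet_Ioc] with t ht
    exact Real.rpow_nonneg ht.1.le a
  simp only [powerWeight]
  rw [← ofReal_integral_eq_lintegral_ofReal integrable nonneg,
    ← intervalIntegral.integral_of_le hh, integral_rpow (Or.inl ha),
    Real.zero_rpow (by linarith), sub_zero]

theorem setLIntegral_powerWeight_dual_rpow (hp : 1 < p) (ha : a < p - 1) (hh : 0 ≤ h) :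
    (∫⁻ t in Ioc 0 h, powerWeight a t ^ (1 - p.conjExponent)) ^ (p - 1) =
      ENNReal.ofReal (h ^ (p - 1 - a) / ((p - 1 - a) / (p - 1)) ^ (p - 1)) := by
  have hp' : 0 < p - 1 := sub_pos.2 hp
  have exponent : a * (1 - p.conjExponent) + 1 = (p - 1 - a) / (p - 1) := by
    rw [Real.conjExponent]
    field_simp
    ring
  have exponent_pos : 0 < (p - 1 - a) / (p - 1) := div_pos (sub_pos.2 ha) hp'
  rw [setLIntegral_congr_fun measurableSet_Ioc fun t ht => powerWeight_rpow ht.1 _,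
    setLIntegral_powerWeight (by linarith) hh, exponent,
    ENNReal.ofReal_rpow_of_nonneg (by positivity) hp'.le,
    Real.div_rpow (by positivity) exponent_pos.le, ← Real.rpow_mul hh,
    div_mul_cancel₀ _ hp'.ne']

end PowerWeight

section VerticalSegments

variable {X : Type*} {p a h : ℝ} {A : Set X}

/-- The density `ρ₀ = h⁻¹ 1_{A × (0, h)}`, a competitor for the modulus of the vertical segments
of height `h` over `A`. -/
def verticalDensity (A : Set X) (h : ℝ) (x : X) (t : ℝ) : ℝ≥0∞ :=
  (A ×ˢ Ioo 0 h).indicator (fun _ => ENNReal.ofReal h⁻¹) (x, t)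

theorem verticalDensity_eq_indicator :
    verticalDensity A h = A.indicator fun _ => (Ioo 0 h).indicator fun _ => ENNReal.ofReal h⁻¹ := by
  ext x t
  by_cases hx : x ∈ A <;> simp [verticalDensity, indicator, hx]

theorem indicator_Ioo_ae_eq (c : ℝ≥0∞) :
    (Ioo 0 h).indicator (fun _ => c) =ᵐ[volume.restrict (Ioc 0 h)] fun _ => c := by
  rw [← Measure.restrict_congr_set Ioo_ae_eq_Ioc]
  exact indicator_ae_eq_restrict measurableSet_Ioo

theorem isFiberAdmissible_verticalDensity (hh : 0 < h) :
    IsFiberAdmissible (volume.restrict (Ioc 0 h)) A (verticalDensity A h) := by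
  rw [verticalDensity_eq_indicator]
  refine isFiberAdmissible_indicator (le_of_eq ?_)
  rw [lintegral_congr_ae (indicator_Ioo_ae_eq _), setLIntegral_const, Real.volume_Ioc, sub_zero,
    ← ENNReal.ofReal_mul (by positivity), inv_mul_cancel₀ hh.ne', ENNReal.ofReal_one]

variable [MeasurableSpace X] {μ : Measure X}

theorem measurable_uncurry_verticalDensity (hA : MeasurableSet A) :
    Measurable (Function.uncurry (verticalDensity A h)) :=
  measurable_const.indicator (hA.prod measurableSet_Ioo)

theorem fiberEnergy_verticalDensity (hp : 0 < p) (ha : -1 < a) (hA : MeasurableSet A)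
    (hh : 0 < h) :
    fiberEnergy p μ (volume.restrict (Ioc 0 h)) (powerWeight a) (verticalDensity A h) =
      μ A / ENNReal.ofReal ((1 + a) * h ^ (p - 1 - a)) := by
  have ha' : 0 < a + 1 := by linarith
  have constant : h⁻¹ ^ p * (h ^ (a + 1) / (a + 1)) = ((1 + a) * h ^ (p - 1 - a))⁻¹ := by
    rw [Real.inv_rpow hh.le, ← Real.rpow_neg hh.le, mul_div_assoc', ← Real.rpow_add hh, mul_inv,
      ← Real.rpow_neg hh.le, add_comm 1 a, div_eq_inv_mul]
    ring_nf
  have integrand_ae_eq : (fun t => (Ioo 0 h).indicator (fun _ => ENNReal.ofReal h⁻¹) t ^ p *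
      powerWeight a t) =ᵐ[volume.restrict (Ioc 0 h)]
      fun t => ENNReal.ofReal h⁻¹ ^ p * powerWeight a t :=
    (indicator_Ioo_ae_eq _).mono fun t ht => congrArg (· ^ p * powerWeight a t) ht
  have fiber_energy : ∫⁻ t in Ioc 0 h,
      (Ioo 0 h).indicator (fun _ => ENNReal.ofReal h⁻¹) t ^ p * powerWeight a t =
      (ENNReal.ofReal ((1 + a) * h ^ (p - 1 - a)))⁻¹ := by
    rw [lintegral_congr_ae integrand_ae_eq, lintegral_const_mul _ measurable_powerWeight,
      setLIntegral_powerWeight ha hh.le, ENNReal.ofReal_rpow_of_pos (inv_pos.2 hh),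
      ← ENNReal.ofReal_mul (by positivity), constant,
      ENNReal.ofReal_inv_of_pos (by rw [add_comm]; positivity)]
  rw [verticalDensity_eq_indicator, fiberEnergy_indicator hp hA, fiber_energy, div_eq_mul_inv]

theorem IsFiberAdmissible.div_le_fiberEnergy_powerWeight {ρ : X → ℝ → ℝ≥0∞}
    (hadm : IsFiberAdmissible (volume.restrict (Ioc 0 h)) A ρ) (hp : 1 < p) (ha : a < p - 1)
    (hA : MeasurableSet A) (hh : 0 < h) (hρ : Measurable (Function.uncurry ρ)) :
    ENNReal.ofReal (((p - 1 - a) / (p - 1)) ^ (p - 1)) * μ A / ENNReal.ofReal (h ^ (p - 1 - a)) ≤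
      fiberEnergy p μ (volume.restrict (Ioc 0 h)) (powerWeight a) ρ := by
  have weight_ne_zero : ∀ᵐ t ∂volume.restrict (Ioc 0 h), powerWeight a t ≠ 0 := by
    filter_upwards [ae_restrict_mem measurableSet_Ioc] with t ht using powerWeight_ne_zero ht.1
  have constant_pos : 0 < ((p - 1 - a) / (p - 1)) ^ (p - 1) :=
    Real.rpow_pos_of_pos (div_pos (sub_pos.2 ha) (sub_pos.2 hp)) _
  have bound := hadm.div_le_fiberEnergy (μ := μ) (Real.HolderConjugate.conjExponent hp)
    measurable_powerWeight.aemeasurable weight_ne_zero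
    (ae_of_all _ fun _ => ENNReal.ofReal_ne_top) hA hρ
  rw [setLIntegral_powerWeight_dual_rpow hp ha hh.le, div_eq_mul_inv,
    ← ENNReal.ofReal_inv_of_pos (div_pos (Real.rpow_pos_of_pos hh _) constant_pos), inv_div,
    ENNReal.ofReal_div_of_pos (Real.rpow_pos_of_pos hh _)] at bound
  rwa [mul_comm, mul_div_assoc]

end VerticalSegments

theorem statement11_general {X : Type*} [MeasurableSpace X] (μX : Measure X) (p a : ℝ)
    (hp : 1 < p) (ha₁ : -1 < a) (ha₂ : a < p - 1) (A : Set X) (hA : MeasurableSet A)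
    (h : ℝ) (hh : 0 < h) :
    let ν := volume.restrict (Ioc 0 h)
    let lower := ENNReal.ofReal (((p - 1 - a) / (p - 1)) ^ (p - 1)) * μX A /
      ENNReal.ofReal (h ^ (p - 1 - a))
    let upper := μX A / ENNReal.ofReal ((1 + a) * h ^ (p - 1 - a))
    (∀ ρ : X → ℝ → ℝ≥0∞, Measurable (Function.uncurry ρ) → IsFiberAdmissible ν A ρ →
      lower ≤ fiberEnergy p μX ν (powerWeight a) ρ) ∧
    (Measurable (Function.uncurry (verticalDensity A h)) ∧
      IsFiberAdmissible ν A (verticalDensity A h) ∧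
      fiberEnergy p μX ν (powerWeight a) (verticalDensity A h) = upper) ∧
    (lower ≤ fiberModulus p μX ν (powerWeight a) A ∧
      fiberModulus p μX ν (powerWeight a) A ≤ upper) := by
  intro ν lower upper
  have lower_bound : ∀ ρ : X → ℝ → ℝ≥0∞, Measurable (Function.uncurry ρ) →
      IsFiberAdmissible ν A ρ → lower ≤ fiberEnergy p μX ν (powerWeight a) ρ :=
    fun _ hρ hadm => hadm.div_le_fiberEnergy_powerWeight hp ha₂ hA hh hρ
  have measurable := measurable_uncurry_verticalDensity (h := h) hA
  have admissible := isFiberAdmissible_verticalDensity (A := A) hh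
  have energy : fiberEnergy p μX ν (powerWeight a) (verticalDensity A h) = upper :=
    fiberEnergy_verticalDensity (zero_lt_one.trans hp) ha₁ hA hh
  exact ⟨lower_bound, ⟨measurable, admissible, energy⟩,
    le_iInf fun ρ => le_iInf₂ (lower_bound ρ),
    (fiberModulus_le_fiberEnergy measurable admissible).trans_eq energy⟩

/-- Lemma 3.2 of the paper (modulus of the family of vertical segments): for a measurable
set `A ⊆ X` and `h > 0`, with the weighted measure `t^a dt dμ_X` on `X × (0,∞)`:
(i) every admissible density `ρ` (i.e. `∫₀^h ρ(x,t) dt ≥ 1` for all `x ∈ A`) has weighted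
energy at least `(1−a) μ_X(A) / h^{1−a}`;
(ii) the density `ρ₀ = h^{−1} 1_{A×(0,h)}` is admissible with energy exactly
`μ_X(A)/((1+a) h^{1−a})`; and consequently
(iii) the 2-modulus of the family of vertical segments over `A` of height `h` is
comparable to `μ_X(A)/h^{1−a}`. -/
theorem statement11 {X : Type*} [MetricSpace X] [MeasurableSpace X] [BorelSpace X]
    (μX : Measure X) (a : ℝ) (ha₁ : -1 < a) (ha₂ : a < 1)
    (A : Set X) (hA : MeasurableSet A) (h : ℝ) (hh : 0 < h) :
    (∀ ρ : X → ℝ → ℝ≥0∞, Measurable (Function.uncurry ρ) →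
      (∀ x ∈ A, 1 ≤ ∫⁻ t in Set.Ioc (0 : ℝ) h, ρ x t) →
      ENNReal.ofReal (1 - a) * μX A / ENNReal.ofReal (h ^ (1 - a)) ≤
        ∫⁻ x, (∫⁻ t in Set.Ioc (0 : ℝ) h, ρ x t ^ 2 * ENNReal.ofReal (t ^ a)) ∂μX) ∧
    (Measurable (Function.uncurry fun (x : X) (t : ℝ) =>
        Set.indicator (A ×ˢ Set.Ioo (0 : ℝ) h) (fun _ => ENNReal.ofReal h⁻¹) (x, t)) ∧
      (∀ x ∈ A, 1 ≤ ∫⁻ t in Set.Ioc (0 : ℝ) h,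
        Set.indicator (A ×ˢ Set.Ioo (0 : ℝ) h) (fun _ => ENNReal.ofReal h⁻¹) (x, t)) ∧
      ∫⁻ x, (∫⁻ t in Set.Ioc (0 : ℝ) h,
          (Set.indicator (A ×ˢ Set.Ioo (0 : ℝ) h) (fun _ => ENNReal.ofReal h⁻¹) (x, t)) ^ 2 *
            ENNReal.ofReal (t ^ a)) ∂μX =
        μX A / ENNReal.ofReal ((1 + a) * h ^ (1 - a))) ∧
    (ENNReal.ofReal (1 - a) * μX A / ENNReal.ofReal (h ^ (1 - a)) ≤
        (⨅ (ρ : X → ℝ → ℝ≥0∞) (_ : Measurable (Function.uncurry ρ))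
          (_ : ∀ x ∈ A, 1 ≤ ∫⁻ t in Set.Ioc (0 : ℝ) h, ρ x t),
          ∫⁻ x, (∫⁻ t in Set.Ioc (0 : ℝ) h, ρ x t ^ 2 * ENNReal.ofReal (t ^ a)) ∂μX) ∧
      (⨅ (ρ : X → ℝ → ℝ≥0∞) (_ : Measurable (Function.uncurry ρ))
          (_ : ∀ x ∈ A, 1 ≤ ∫⁻ t in Set.Ioc (0 : ℝ) h, ρ x t),
          ∫⁻ x, (∫⁻ t in Set.Ioc (0 : ℝ) h, ρ x t ^ 2 * ENNReal.ofReal (t ^ a)) ∂μX) ≤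
        μX A / ENNReal.ofReal ((1 + a) * h ^ (1 - a))) := by
  simpa only [IsFiberAdmissible, fiberEnergy, fiberModulus, verticalDensity, powerWeight,
    ENNReal.rpow_two, show (2 : ℝ) - 1 = 1 by norm_num, div_one, Real.rpow_one] using!
    statement11_general μX 2 a one_lt_two ha₁ (by linarith) A hA h hh
end
end

section
/- Let (X,d_X) be a C_q-quasiconvex metric space for some C_q ≥ 1, and let Z = X × ℝ carry the metric d_Z((x₁,y₁),(x₂,y₂)) = max{d_X(x₁,x₂), |y₁ − y₂|}. Then Z₊ := X × (0,∞) is an A-uniform domain in Z with A = 2(2 + C_q): for every pair of points z₁, z₂ ∈ Z₊ there is a rectifiable curve γ in Z₊ joining z₁ to z₂ with length ℓ(γ) ≤ A · d_Z(z₁,z₂) and such that every point z on γ satisfies dist(z, Z ∖ Z₊) ≥ A^{−1} min{ℓ(γ_{z₁,z}), ℓ(γ_{z₂,z})}, where γ_{z₁,z} and γ_{z₂,z} are the subcurves of γ joining z to z₁ and z₂ respectively. -/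
open MeasureTheory Metric Filter Set
open scoped ENNReal NNReal

noncomputable section

/-! Join `(x₁, y₁)` to `(x₂, y₂)`, at distance `d`, by climbing to height
`H = max y₁ y₂ + d / 2`, following a quasiconvexity curve of `X` at that height, and descending.
The length is at most `|y₁ - y₂| + d + C * dist x₁ x₂ ≤ (2 + C) * d`. The distance to the complement
of the half-space is at least the height. During the climb the height exceeds the length travelled
so far, likewise for the descent; at height `H ≥ d / 2` the shorter of the two subcurves has at most
half the total length, hence length at most `(2 + C) * H`. So `2 + C` already serves as the
uniformity constant. -/

section Variation

variable {α E F : Type*} [LinearOrder α]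

theorem eVariationOn_Icc_add_Icc [PseudoEMetricSpace E] (f : α → E) {a b c : α} (hab : a ≤ b)
    (hbc : b ≤ c) :
    eVariationOn f (Icc a b) + eVariationOn f (Icc b c) = eVariationOn f (Icc a c) := by
  simpa only [univ_inter] using eVariationOn.Icc_add_Icc f hab hbc (mem_univ b)

theorem min_eVariationOn_le_half [PseudoEMetricSpace E] (f : α → E) {a b c : α} (hab : a ≤ b)
    (hbc : b ≤ c) :
    min (eVariationOn f (Icc a b)) (eVariationOn f (Icc b c)) ≤ eVariationOn f (Icc a c) / 2 := by
  rw [ENNReal.le_div_iff_mul_le (by simp) (by simp), mul_two, ← eVariationOn_Icc_add_Icc f hab hbc]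
  exact add_le_add (min_le_left _ _) (min_le_right _ _)

theorem eVariationOn_prodMk_le [PseudoEMetricSpace E] [PseudoEMetricSpace F] (f : α → E)
    (g : α → F) (s : Set α) :
    eVariationOn (fun t => (f t, g t)) s ≤ eVariationOn f s + eVariationOn g s := by
  refine iSup_le fun ⟨n, u, hu, us⟩ => ?_
  calc ∑ i ∈ Finset.range n, edist (f (u (i + 1)), g (u (i + 1))) (f (u i), g (u i))
      ≤ ∑ i ∈ Finset.range n,
          (edist (f (u (i + 1))) (f (u i)) + edist (g (u (i + 1))) (g (u i))) :=
        Finset.sum_le_sum fun i _ => max_le le_self_add le_add_self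
    _ ≤ eVariationOn f s + eVariationOn g s := by
        rw [Finset.sum_add_distrib]
        exact add_le_add (eVariationOn.sum_le hu us) (eVariationOn.sum_le hu us)

theorem eVariationOn_Icc_of_monotoneOn {g : α → ℝ} {a b : α} (hab : a ≤ b)
    (hg : MonotoneOn g (Icc a b)) : eVariationOn g (Icc a b) = ENNReal.ofReal (g b - g a) := by
  simpa only [inter_self] using hg.eVariationOn_eq (left_mem_Icc.2 hab) (right_mem_Icc.2 hab)

theorem eVariationOn_neg [SeminormedAddCommGroup E] (f : α → E) (s : Set α) :
    eVariationOn (fun t => -f t) s = eVariationOn f s := by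
  simp only [eVariationOn, edist_neg_neg]

theorem eVariationOn_Icc_of_antitoneOn {g : α → ℝ} {a b : α} (hab : a ≤ b)
    (hg : AntitoneOn g (Icc a b)) : eVariationOn g (Icc a b) = ENNReal.ofReal (g a - g b) := by
  simpa only [eVariationOn_neg, neg_sub_neg] using
    eVariationOn_Icc_of_monotoneOn hab hg.neg

end Variation

section ArchHeight

/-- The height profile of an arch: it rises linearly from `y₁` to `H` on `[0, 1/3]`, stays at `H` on
`[1/3, 2/3]` and falls linearly to `y₂` on `[2/3, 1]`. -/
def archHeight (y₁ y₂ H t : ℝ) : ℝ :=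
  H - (H - y₁) * max 0 (1 - 3 * t) - (H - y₂) * max 0 (3 * t - 2)

variable {y₁ y₂ H t : ℝ}

theorem archHeight_zero : archHeight y₁ y₂ H 0 = y₁ := by
  norm_num [archHeight]

theorem archHeight_one : archHeight y₁ y₂ H 1 = y₂ := by
  norm_num [archHeight]

theorem archHeight_eq_top (ht : t ∈ Icc (1 / 3) (2 / 3)) : archHeight y₁ y₂ H t = H := by
  rw [archHeight, max_eq_left (by linarith [ht.1]), max_eq_left (by linarith [ht.2])]
  ring

theorem continuous_archHeight : Continuous (archHeight y₁ y₂ H) := by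
  unfold archHeight
  fun_prop

theorem monotoneOn_archHeight (h₁ : y₁ ≤ H) : MonotoneOn (archHeight y₁ y₂ H) (Iic (2 / 3)) := by
  intro s (hs : s ≤ 2 / 3) t (ht : t ≤ 2 / 3) hst
  have := sub_nonneg.2 h₁
  rw [archHeight, archHeight, max_eq_left (a := 0) (b := 3 * s - 2) (by linarith),
    max_eq_left (a := 0) (b := 3 * t - 2) (by linarith)]
  gcongr

theorem antitoneOn_archHeight (h₂ : y₂ ≤ H) : AntitoneOn (archHeight y₁ y₂ H) (Ici (1 / 3)) := by
  intro s (hs : 1 / 3 ≤ s) t (ht : 1 / 3 ≤ t) hst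
  have := sub_nonneg.2 h₂
  rw [archHeight, archHeight, max_eq_left (a := 0) (b := 1 - 3 * s) (by linarith),
    max_eq_left (a := 0) (b := 1 - 3 * t) (by linarith)]
  gcongr

theorem min_le_archHeight (h₁ : y₁ ≤ H) (h₂ : y₂ ≤ H) (ht : t ∈ Icc 0 1) :
    min y₁ y₂ ≤ archHeight y₁ y₂ H t := by
  rcases le_total t (2 / 3) with htwoThirds | htwoThirds
  · calc min y₁ y₂ ≤ y₁ := min_le_left _ _
      _ = archHeight y₁ y₂ H 0 := archHeight_zero.symm
      _ ≤ archHeight y₁ y₂ H t := monotoneOn_archHeight h₁ (ht.1.trans htwoThirds) htwoThirds ht.1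
  · have hthird : 1 / 3 ≤ t := by linarith
    calc min y₁ y₂ ≤ y₂ := min_le_right _ _
      _ = archHeight y₁ y₂ H 1 := archHeight_one.symm
      _ ≤ archHeight y₁ y₂ H t := antitoneOn_archHeight h₂ hthird (hthird.trans ht.2) ht.2

theorem eVariationOn_archHeight_Icc_zero (h₁ : y₁ ≤ H) (ht : t ∈ Icc 0 (2 / 3)) :
    eVariationOn (archHeight y₁ y₂ H) (Icc 0 t) =
      ENNReal.ofReal (archHeight y₁ y₂ H t - y₁) := by
  have hmono : MonotoneOn (archHeight y₁ y₂ H) (Icc 0 t) :=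
    (monotoneOn_archHeight h₁).mono fun _ hs => hs.2.trans ht.2
  simpa only [archHeight_zero] using eVariationOn_Icc_of_monotoneOn ht.1 hmono

theorem eVariationOn_archHeight_Icc_one (h₂ : y₂ ≤ H) (ht : t ∈ Icc (1 / 3) 1) :
    eVariationOn (archHeight y₁ y₂ H) (Icc t 1) =
      ENNReal.ofReal (archHeight y₁ y₂ H t - y₂) := by
  have hanti : AntitoneOn (archHeight y₁ y₂ H) (Icc t 1) :=
    (antitoneOn_archHeight h₂).mono fun _ hs => ht.1.trans hs.1
  simpa only [archHeight_one] using eVariationOn_Icc_of_antitoneOn ht.2 hanti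

theorem eVariationOn_archHeight (h₁ : y₁ ≤ H) (h₂ : y₂ ≤ H) :
    eVariationOn (archHeight y₁ y₂ H) (Icc 0 1) = ENNReal.ofReal ((H - y₁) + (H - y₂)) := by
  have htop : archHeight y₁ y₂ H (1 / 2) = H := archHeight_eq_top (by norm_num)
  have hclimb := eVariationOn_archHeight_Icc_zero (y₂ := y₂) h₁ (t := 1 / 2) (by norm_num)
  have hdescent := eVariationOn_archHeight_Icc_one (y₁ := y₁) h₂ (t := 1 / 2) (by norm_num)
  rw [htop] at hclimb hdescent
  rw [← eVariationOn_Icc_add_Icc _ (b := 1 / 2) (by norm_num) (by norm_num),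
    hclimb, hdescent, ENNReal.ofReal_add (sub_nonneg.2 h₁) (sub_nonneg.2 h₂)]

end ArchHeight

section MiddleThird

variable {X : Type*}

/-- The curve `σ|_[0,1]`, run through during `[1/3, 2/3]` and standing still before and after. -/
def middleThird (σ : ℝ → X) (t : ℝ) : X := σ (projIcc 0 1 zero_le_one (3 * t - 1))

theorem middleThird_of_le (σ : ℝ → X) {t : ℝ} (ht : t ≤ 1 / 3) : middleThird σ t = σ 0 := by
  rw [middleThird, projIcc_of_le_left _ (by linarith)]

theorem middleThird_of_ge (σ : ℝ → X) {t : ℝ} (ht : 2 / 3 ≤ t) : middleThird σ t = σ 1 := by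
  rw [middleThird, projIcc_of_right_le _ (by linarith)]

theorem continuous_middleThird [TopologicalSpace X] {σ : ℝ → X} (hσ : ContinuousOn σ (Icc 0 1)) :
    Continuous (middleThird σ) :=
  hσ.domRestrict.comp (continuous_projIcc.comp (by fun_prop : Continuous fun t : ℝ => 3 * t - 1))

theorem eVariationOn_middleThird_le [PseudoEMetricSpace X] (σ : ℝ → X) (s : Set ℝ) :
    eVariationOn (middleThird σ) s ≤ eVariationOn σ (Icc 0 1) := by
  have hmono : Monotone fun t : ℝ => (projIcc (0 : ℝ) 1 zero_le_one (3 * t - 1) : ℝ) :=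
    fun s t hst => monotone_projIcc _ (by linarith : 3 * s - 1 ≤ 3 * t - 1)
  exact eVariationOn.comp_le_of_monotoneOn σ _ (hmono.monotoneOn s) fun t _ => Subtype.coe_prop _

end MiddleThird

section ArchCurve

variable {X : Type*} {σ : ℝ → X} {y₁ y₂ H t : ℝ}

/-- The arch over `σ|_[0,1]` in `X × ℝ`: climb vertically from `(σ 0, y₁)` to height `H`, follow `σ`
at that height, and descend vertically to `(σ 1, y₂)`. -/
def archCurve (σ : ℝ → X) (y₁ y₂ H t : ℝ) : X × ℝ := (middleThird σ t, archHeight y₁ y₂ H t)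

theorem archCurve_zero : archCurve σ y₁ y₂ H 0 = (σ 0, y₁) := by
  rw [archCurve, archHeight_zero, middleThird_of_le σ (by norm_num)]

theorem archCurve_one : archCurve σ y₁ y₂ H 1 = (σ 1, y₂) := by
  rw [archCurve, archHeight_one, middleThird_of_ge σ (by norm_num)]

theorem continuous_archCurve [TopologicalSpace X] (hσ : ContinuousOn σ (Icc 0 1)) :
    Continuous (archCurve σ y₁ y₂ H) :=
  (continuous_middleThird hσ).prodMk continuous_archHeight

variable [PseudoEMetricSpace X]

theorem eVariationOn_archCurve_le (h₁ : y₁ ≤ H) (h₂ : y₂ ≤ H) :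
    eVariationOn (archCurve σ y₁ y₂ H) (Icc 0 1) ≤
      eVariationOn σ (Icc 0 1) + ENNReal.ofReal ((H - y₁) + (H - y₂)) :=
  (eVariationOn_prodMk_le _ _ _).trans <|
    add_le_add (eVariationOn_middleThird_le σ _) (eVariationOn_archHeight h₁ h₂).le

theorem eVariationOn_archCurve_climb_le (h₁ : y₁ ≤ H) (ht : t ∈ Icc 0 (1 / 3)) :
    eVariationOn (archCurve σ y₁ y₂ H) (Icc 0 t) ≤
      ENNReal.ofReal (archHeight y₁ y₂ H t - y₁) := by
  have hconst : eVariationOn (middleThird σ) (Icc 0 t) = 0 := by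
    refine eVariationOn.constant_on (Set.subsingleton_of_subset_singleton (a := σ 0) ?_)
    rintro _ ⟨s, hs, rfl⟩
    exact middleThird_of_le σ (hs.2.trans ht.2)
  calc eVariationOn (archCurve σ y₁ y₂ H) (Icc 0 t)
      ≤ eVariationOn (middleThird σ) (Icc 0 t) + eVariationOn (archHeight y₁ y₂ H) (Icc 0 t) :=
        eVariationOn_prodMk_le _ _ _
    _ = eVariationOn (archHeight y₁ y₂ H) (Icc 0 t) := by rw [hconst, zero_add]
    _ = ENNReal.ofReal (archHeight y₁ y₂ H t - y₁) :=
        eVariationOn_archHeight_Icc_zero h₁ ⟨ht.1, ht.2.trans (by norm_num)⟩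

theorem eVariationOn_archCurve_descent_le (h₂ : y₂ ≤ H) (ht : t ∈ Icc (2 / 3) 1) :
    eVariationOn (archCurve σ y₁ y₂ H) (Icc t 1) ≤
      ENNReal.ofReal (archHeight y₁ y₂ H t - y₂) := by
  have hconst : eVariationOn (middleThird σ) (Icc t 1) = 0 := by
    refine eVariationOn.constant_on (Set.subsingleton_of_subset_singleton (a := σ 1) ?_)
    rintro _ ⟨s, hs, rfl⟩
    exact middleThird_of_ge σ (ht.1.trans hs.1)
  calc eVariationOn (archCurve σ y₁ y₂ H) (Icc t 1)
      ≤ eVariationOn (middleThird σ) (Icc t 1) + eVariationOn (archHeight y₁ y₂ H) (Icc t 1) :=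
        eVariationOn_prodMk_le _ _ _
    _ = eVariationOn (archHeight y₁ y₂ H) (Icc t 1) := by rw [hconst, zero_add]
    _ = ENNReal.ofReal (archHeight y₁ y₂ H t - y₂) :=
        eVariationOn_archHeight_Icc_one h₂ ⟨le_trans (by norm_num) ht.1, ht.2⟩

theorem min_eVariationOn_archCurve_le (hy₁ : 0 ≤ y₁) (hy₂ : 0 ≤ y₂) (h₁ : y₁ ≤ H) (h₂ : y₂ ≤ H)
    {A : ℝ} (hA : 1 ≤ A)
    (hlength : eVariationOn (archCurve σ y₁ y₂ H) (Icc 0 1) ≤ ENNReal.ofReal (A * H * 2))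
    (ht : t ∈ Icc 0 1) :
    min (eVariationOn (archCurve σ y₁ y₂ H) (Icc 0 t))
        (eVariationOn (archCurve σ y₁ y₂ H) (Icc t 1)) ≤
      ENNReal.ofReal (A * archHeight y₁ y₂ H t) := by
  have hheight : archHeight y₁ y₂ H t ≤ A * archHeight y₁ y₂ H t :=
    le_mul_of_one_le_left ((le_min hy₁ hy₂).trans (min_le_archHeight h₁ h₂ ht)) hA
  rcases le_total t (1 / 3) with hthird | hthird
  · exact (min_le_left _ _).trans <|
      (eVariationOn_archCurve_climb_le h₁ ⟨ht.1, hthird⟩).trans <|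
      ENNReal.ofReal_le_ofReal (by linarith)
  rcases le_total t (2 / 3) with htwoThirds | htwoThirds
  · calc min (eVariationOn (archCurve σ y₁ y₂ H) (Icc 0 t))
          (eVariationOn (archCurve σ y₁ y₂ H) (Icc t 1))
        ≤ eVariationOn (archCurve σ y₁ y₂ H) (Icc 0 1) / 2 := min_eVariationOn_le_half _ ht.1 ht.2
      _ ≤ ENNReal.ofReal (A * H * 2) / 2 := by gcongr
      _ = ENNReal.ofReal (A * archHeight y₁ y₂ H t) := by
        rw [archHeight_eq_top ⟨hthird, htwoThirds⟩, ← ENNReal.ofReal_ofNat 2,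
          ← ENNReal.ofReal_div_of_pos two_pos, mul_div_cancel_right₀ _ two_ne_zero]
  · exact (min_le_right _ _).trans <|
      (eVariationOn_archCurve_descent_le h₂ ⟨htwoThirds, ht.2⟩).trans <|
      ENNReal.ofReal_le_ofReal (by linarith)

end ArchCurve

section UniformDomain

/-- `C`-quasiconvexity: any two points are joined by a curve of length at most `C` times their
distance. Curves are parametrized by `[0, 1]` and extended arbitrarily to `ℝ`. -/
def IsQuasiconvex (C : ℝ) (X : Type*) [PseudoMetricSpace X] : Prop :=
  ∀ x y : X, ∃ γ : ℝ → X, ContinuousOn γ (Icc 0 1) ∧ γ 0 = x ∧ γ 1 = y ∧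
    eVariationOn γ (Icc 0 1) ≤ ENNReal.ofReal (C * dist x y)

/-- The curve condition of an `A`-uniform domain `U`; openness of `U` is not part of it. The bound
on the distance to the complement is multiplied out by `A`. -/
def IsUniformDomain {Z : Type*} [PseudoMetricSpace Z] (A : ℝ) (U : Set Z) : Prop :=
  ∀ ⦃z₁ z₂ : Z⦄, z₁ ∈ U → z₂ ∈ U →
    ∃ γ : ℝ → Z, ContinuousOn γ (Icc 0 1) ∧ γ 0 = z₁ ∧ γ 1 = z₂ ∧
      (∀ t ∈ Icc (0 : ℝ) 1, γ t ∈ U) ∧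
      eVariationOn γ (Icc 0 1) ≤ ENNReal.ofReal (A * dist z₁ z₂) ∧
      ∀ t ∈ Icc (0 : ℝ) 1,
        min (eVariationOn γ (Icc 0 t)) (eVariationOn γ (Icc t 1)) ≤
          ENNReal.ofReal (A * infDist (γ t) Uᶜ)

theorem IsUniformDomain.mono {Z : Type*} [PseudoMetricSpace Z] {A B : ℝ} {U : Set Z}
    (hU : IsUniformDomain A U) (hAB : A ≤ B) : IsUniformDomain B U := by
  intro z₁ z₂ hz₁ hz₂
  obtain ⟨γ, hcont, h0, h1, hmem, hlength, hcone⟩ := hU hz₁ hz₂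
  refine ⟨γ, hcont, h0, h1, hmem, hlength.trans ?_, fun t ht => (hcone t ht).trans ?_⟩
  · gcongr
  · have : 0 ≤ infDist (γ t) Uᶜ := infDist_nonneg
    gcongr

/-- The half-space `Z₊ = X × (0, ∞)` of `X × ℝ`. -/
def upperHalfSpace (X : Type*) : Set (X × ℝ) := {z | 0 < z.2}

theorem compl_upperHalfSpace (X : Type*) : (upperHalfSpace X)ᶜ = {z : X × ℝ | z.2 ≤ 0} := by
  ext z
  exact not_lt (a := (0 : ℝ))

variable {X : Type*} [PseudoMetricSpace X]

theorem snd_le_infDist_compl_upperHalfSpace (z : X × ℝ) :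
    z.2 ≤ infDist z (upperHalfSpace X)ᶜ := by
  rw [compl_upperHalfSpace]
  refine (le_infDist ⟨(z.1, 0), le_refl (0 : ℝ)⟩).2 fun w (hw : w.2 ≤ 0) => ?_
  calc z.2 ≤ z.2 - w.2 := by linarith
    _ ≤ dist z.2 w.2 := le_abs_self _
    _ ≤ dist z w := le_max_right _ _

theorem eVariationOn_archCurve_le_mul_dist {C : ℝ} (hC : 0 ≤ C) {σ : ℝ → X}
    (hσ : eVariationOn σ (Icc 0 1) ≤ ENNReal.ofReal (C * dist (σ 0) (σ 1))) {y₁ y₂ d : ℝ}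
    (hd : dist (σ 0, y₁) (σ 1, y₂) = d) :
    eVariationOn (archCurve σ y₁ y₂ (max y₁ y₂ + d / 2)) (Icc 0 1) ≤
      ENNReal.ofReal ((2 + C) * d) := by
  have hd0 : 0 ≤ d := hd ▸ dist_nonneg
  have hdx : dist (σ 0) (σ 1) ≤ d := hd ▸ le_max_left _ _
  have hdy : max y₁ y₂ - min y₁ y₂ ≤ d := by
    rw [max_sub_min_eq_abs', ← hd]
    exact le_max_right _ _
  have hsum := max_add_min y₁ y₂
  have h₁ : y₁ ≤ max y₁ y₂ + d / 2 := by linarith [le_max_left y₁ y₂]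
  have h₂ : y₂ ≤ max y₁ y₂ + d / 2 := by linarith [le_max_right y₁ y₂]
  calc eVariationOn (archCurve σ y₁ y₂ (max y₁ y₂ + d / 2)) (Icc 0 1)
      ≤ eVariationOn σ (Icc 0 1) +
          ENNReal.ofReal ((max y₁ y₂ + d / 2 - y₁) + (max y₁ y₂ + d / 2 - y₂)) :=
        eVariationOn_archCurve_le h₁ h₂
    _ ≤ ENNReal.ofReal (C * d) + ENNReal.ofReal (2 * d) := by
        gcongr
        · exact hσ.trans (by gcongr)
        · linarith
    _ = ENNReal.ofReal ((2 + C) * d) := by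
        rw [← ENNReal.ofReal_add (by positivity) (by positivity)]
        ring_nf

theorem statement12_general {C : ℝ} (hC : 0 ≤ C) (hX : IsQuasiconvex C X) :
    IsUniformDomain (2 + C) (upperHalfSpace X) := by
  rintro ⟨x₁, y₁⟩ ⟨x₂, y₂⟩ (hy₁ : 0 < y₁) (hy₂ : 0 < y₂)
  obtain ⟨σ, hσ, rfl, rfl, hσlength⟩ := hX x₁ x₂
  set d := dist (σ 0, y₁) (σ 1, y₂) with hd
  have hd0 : 0 ≤ d := dist_nonneg
  set H := max y₁ y₂ + d / 2 with hH
  have h₁ : y₁ ≤ H := by linarith [le_max_left y₁ y₂]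
  have h₂ : y₂ ≤ H := by linarith [le_max_right y₁ y₂]
  have hlength : eVariationOn (archCurve σ y₁ y₂ H) (Icc 0 1) ≤ ENNReal.ofReal ((2 + C) * d) :=
    eVariationOn_archCurve_le_mul_dist hC hσlength hd.symm
  have hdH : (2 + C) * d ≤ (2 + C) * H * 2 := by
    rw [mul_assoc]
    gcongr
    linarith [le_max_left y₁ y₂]
  refine ⟨archCurve σ y₁ y₂ H, (continuous_archCurve hσ).continuousOn, archCurve_zero,
    archCurve_one, fun t ht => (lt_min hy₁ hy₂).trans_le (min_le_archHeight h₁ h₂ ht), hlength,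
    fun t ht => ?_⟩
  calc min (eVariationOn (archCurve σ y₁ y₂ H) (Icc 0 t))
        (eVariationOn (archCurve σ y₁ y₂ H) (Icc t 1))
      ≤ ENNReal.ofReal ((2 + C) * (archCurve σ y₁ y₂ H t).2) :=
        min_eVariationOn_archCurve_le hy₁.le hy₂.le h₁ h₂ (by linarith)
          (hlength.trans (ENNReal.ofReal_le_ofReal hdH)) ht
    _ ≤ ENNReal.ofReal ((2 + C) * infDist (archCurve σ y₁ y₂ H t) (upperHalfSpace X)ᶜ) := by
        gcongr
        exact snd_le_infDist_compl_upperHalfSpace _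

end UniformDomain

/-- Uniformity of the half-space `Z₊ = X × (0,∞)` in `Z = X × ℝ` (Proposition 4.1 of the
paper): if `X` is `C_q`-quasiconvex, then any two points of `Z₊` are joined by a curve in
`Z₊` of length at most `A = 2(2+C_q)` times their distance, along which the distance to
the complement of `Z₊` is at least `A⁻¹` times the minimum of the lengths of the two
subcurves to the endpoints.  Here `X × ℝ` carries the sup metric. -/
theorem statement12 {X : Type*} [MetricSpace X] (Cq : ℝ) (hCq : 1 ≤ Cq)
    (hqc : ∀ x y : X, ∃ γ : ℝ → X, ContinuousOn γ (Set.Icc 0 1) ∧ γ 0 = x ∧ γ 1 = y ∧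
      eVariationOn γ (Set.Icc 0 1) ≤ ENNReal.ofReal (Cq * dist x y)) :
    ∀ z₁ z₂ : X × ℝ, 0 < z₁.2 → 0 < z₂.2 →
      ∃ γ : ℝ → X × ℝ, ContinuousOn γ (Set.Icc 0 1) ∧ γ 0 = z₁ ∧ γ 1 = z₂ ∧
        (∀ t ∈ Set.Icc (0 : ℝ) 1, 0 < (γ t).2) ∧
        eVariationOn γ (Set.Icc 0 1) ≤ ENNReal.ofReal (2 * (2 + Cq) * dist z₁ z₂) ∧
        ∀ t ∈ Set.Icc (0 : ℝ) 1,
          min (eVariationOn γ (Set.Icc 0 t)) (eVariationOn γ (Set.Icc t 1)) ≤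
            ENNReal.ofReal
              (2 * (2 + Cq) * Metric.infDist (γ t) {z : X × ℝ | z.2 ≤ 0}) := by
  intro z₁ z₂ hz₁ hz₂
  rw [← compl_upperHalfSpace]
  exact (statement12_general (by linarith) hqc).mono (by linarith) hz₁ hz₂
end
end
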